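/- arXiv:1509.06898 — 2 statements merged into one kernel-verified Lean document; each statement's English description precedes it below -/
import Mathlib

section
/- Let α be an assembly over a tile set in which every glue has strength at most g, suppose the domain of α is a translate of the k × k square with k ≥ 2, and let τ be a nondecreasing temperature function. If α is τ-stable, then τ(⌊k²/2⌋) ≤ (k + 1)·g, and consequently τ(⌊k²/2⌋) ≤ 4·g·√(⌊k²/2⌋) as real numbers. -/
/-!
Cut the square along a column-by-column sweep: put `⌊k²/2⌋ = m * k + r` cells in one part, namely
the first `m = k / 2` full columns and the lowest `r` cells of the next column, where `r = 0` for
even `k` and `r = m` for odd `k`. The bonds crossing this staircase cut are at most one horizontal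
bond per row and one vertical bond at the step, so at most `k + 1` in total, each of strength at
most `g` (`cutStrength_le_of_crossing`). Stability applied to this cut gives the first bound,
because the smaller part has exactly `⌊k²/2⌋` cells. The second one is the elementary estimate
`(k + 1)² ≤ 16 * ⌊k²/2⌋` for `k ≥ 2`.
-/

/-- A tile type over glue alphabet `G`: four glues on the north, east, south,
and west edges. -/
structure Tile (G : Type) where
  north : G
  east : G
  south : G
  west : G

/-- Grid adjacency: two points of `ℤ²` at Euclidean distance 1. -/
def Adj (p q : ℤ × ℤ) : Prop :=
  (p.1 - q.1).natAbs + (p.2 - q.2).natAbs = 1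

/-- A set of grid points is connected under grid adjacency. -/
def ConnectedIn (S : Set (ℤ × ℤ)) : Prop :=
  ∀ p ∈ S, ∀ q ∈ S,
    Relation.ReflTransGen (fun a b => Adj a b ∧ a ∈ S ∧ b ∈ S) p q

/-- An assembly over the tile set `T`: a finite partial function from `ℤ²` to
tiles of `T` whose domain is connected under grid adjacency. -/
structure Assembly (G : Type) (T : Set (Tile G)) where
  tiles : ℤ × ℤ → Option (Tile G)
  dom : Finset (ℤ × ℤ)
  mem_dom : ∀ p, p ∈ dom ↔ (tiles p).isSome
  connected : ConnectedIn (↑dom : Set (ℤ × ℤ))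
  tiles_mem : ∀ p t, tiles p = some t → t ∈ T

/-- Strength of the bond between two abutting glues: the glues bond iff they
are equal, in which case the bond strength is the glue strength. -/
noncomputable def glueBond {G : Type} (str : G → ℕ) (a b : G) : ℕ := by
  classical
  exact if a = b then str a else 0

/-- The strength of the bond between a tile `t` at position `p` and a tile `u`
at position `q` (0 unless `p` and `q` are adjacent and the abutting glues
match). -/
noncomputable def tileBond {G : Type} (str : G → ℕ) (t u : Tile G) (p q : ℤ × ℤ) : ℕ :=
  if q = (p.1 + 1, p.2) then glueBond str t.east u.west
  else if q = (p.1 - 1, p.2) then glueBond str t.west u.east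
  else if q = (p.1, p.2 + 1) then glueBond str t.north u.south
  else if q = (p.1, p.2 - 1) then glueBond str t.south u.north
  else 0

/-- The strength of the bond between the tiles of `α` at positions `p`, `q`. -/
noncomputable def posBond {G : Type} {T : Set (Tile G)} (str : G → ℕ)
    (α : Assembly G T) (p q : ℤ × ℤ) : ℕ :=
  match α.tiles p, α.tiles q with
  | some t, some u => tileBond str t u p q
  | _, _ => 0

/-- The strength of the cut of `α` into the parts `A` and `B`: the total
strength of bonds between tiles in opposite parts. -/
noncomputable def cutStrength {G : Type} {T : Set (Tile G)} (str : G → ℕ)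
    (α : Assembly G T) (A B : Finset (ℤ × ℤ)) : ℕ :=
  ∑ p ∈ A, ∑ q ∈ B, posBond str α p q

/-- An assembly is `τ`-stable if every cut of it into two nonempty parts of
sizes `a` and `b` has strength at least `τ (min a b)`. -/
def IsStable {G : Type} {T : Set (Tile G)} (str : G → ℕ) (τ : ℕ → ℕ)
    (α : Assembly G T) : Prop :=
  ∀ A B : Finset (ℤ × ℤ), Disjoint A B → A ∪ B = α.dom →
    A.Nonempty → B.Nonempty →
    τ (min A.card B.card) ≤ cutStrength str α A B

/-- Two assemblies represent the same supertile iff one is a translate of the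
other. -/
def SameSupertile {G : Type} {T : Set (Tile G)} (α β : Assembly G T) : Prop :=
  ∃ v : ℤ × ℤ, ∀ p : ℤ × ℤ, β.tiles (p + v) = α.tiles p

/-- `γ` is the union of the disjoint assemblies `α` and `β`. -/
def IsUnionOf {G : Type} {T : Set (Tile G)} (γ α β : Assembly G T) : Prop :=
  Disjoint α.dom β.dom ∧ γ.dom = α.dom ∪ β.dom ∧
    (∀ p ∈ α.dom, γ.tiles p = α.tiles p) ∧
    (∀ p ∈ β.dom, γ.tiles p = β.tiles p)

/-- The supertiles of `α` and `β` combine into the supertile of `γ`: there are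
disjoint representatives whose union is a representative of `γ` such that the
cut between them has strength at least `τ` of the size of the smaller part. -/
def CombinesTo {G : Type} {T : Set (Tile G)} (str : G → ℕ) (τ : ℕ → ℕ)
    (α β γ : Assembly G T) : Prop :=
  ∃ α' β' γ' : Assembly G T, SameSupertile α α' ∧ SameSupertile β β' ∧
    SameSupertile γ γ' ∧ IsUnionOf γ' α' β' ∧
    τ (min α'.dom.card β'.dom.card) ≤ cutStrength str γ' α'.dom β'.dom

/-- The supertile of `γ` breaks into the supertiles of `α` and `β`: there are
disjoint representatives (each with connected domain, as all assemblies have)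
whose union is a representative of `γ` such that the cut between them has
strength strictly less than `τ` of the size of the smaller part. -/
def BreaksTo {G : Type} {T : Set (Tile G)} (str : G → ℕ) (τ : ℕ → ℕ)
    (γ α β : Assembly G T) : Prop :=
  ∃ α' β' γ' : Assembly G T, SameSupertile α α' ∧ SameSupertile β β' ∧
    SameSupertile γ γ' ∧ IsUnionOf γ' α' β' ∧
    cutStrength str γ' α'.dom β'.dom < τ (min α'.dom.card β'.dom.card)

/-- The producible supertiles of the size-dependent system `(T, τ)`:
supertiles of size 1, combinations of two producible supertiles, and
supertiles resulting from a break of a producible supertile. -/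
inductive Producible {G : Type} (str : G → ℕ) (T : Set (Tile G)) (τ : ℕ → ℕ) :
    Assembly G T → Prop
  | single (α : Assembly G T) : α.dom.card = 1 → Producible str T τ α
  | combine (α β γ : Assembly G T) : Producible str T τ α →
      Producible str T τ β → CombinesTo str τ α β γ → Producible str T τ γ
  | breakLeft (γ α β : Assembly G T) : Producible str T τ γ →
      BreaksTo str τ γ α β → Producible str T τ α
  | breakRight (γ α β : Assembly G T) : Producible str T τ γ →
      BreaksTo str τ γ α β → Producible str T τ β

/-- A producible supertile is terminal if it admits no combination with any
producible supertile and no break. -/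
def Terminal {G : Type} (str : G → ℕ) (T : Set (Tile G)) (τ : ℕ → ℕ)
    (α : Assembly G T) : Prop :=
  Producible str T τ α ∧
    (∀ β γ : Assembly G T, Producible str T τ β →
      ¬ CombinesTo str τ α β γ ∧ ¬ CombinesTo str τ β α γ) ∧
    (∀ β γ : Assembly G T, ¬ BreaksTo str τ α β γ)

/-- The system `(T, τ)` self-assembles the shape `P` if every terminal
supertile consists of assemblies whose domain is a translate of `P`. -/
def SelfAssembles {G : Type} (str : G → ℕ) (T : Set (Tile G)) (τ : ℕ → ℕ)
    (P : Set (ℤ × ℤ)) : Prop :=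
  ∀ α : Assembly G T, Terminal str T τ α →
    ∃ v : ℤ × ℤ, (↑α.dom : Set (ℤ × ℤ)) = (· + v) '' P

/-- The `w × h` rectangle `{1,…,w} × {1,…,h}`. -/
def rect (w h : ℕ) : Set (ℤ × ℤ) :=
  {p | 1 ≤ p.1 ∧ p.1 ≤ (w : ℤ) ∧ 1 ≤ p.2 ∧ p.2 ≤ (h : ℤ)}

lemma glueBond_le {G : Type} {str : G → ℕ} {g : ℕ} (hg : ∀ a, str a ≤ g) (a b : G) :
    glueBond str a b ≤ g := by
  unfold glueBond
  split_ifs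
  · exact hg a
  · exact Nat.zero_le _

lemma posBond_le {G : Type} {T : Set (Tile G)} {str : G → ℕ} {g : ℕ} (hg : ∀ a, str a ≤ g)
    (α : Assembly G T) (p q : ℤ × ℤ) : posBond str α p q ≤ g := by
  unfold posBond
  split
  · unfold tileBond
    split_ifs <;> first | exact glueBond_le hg _ _ | exact Nat.zero_le _
  · exact Nat.zero_le _

lemma adj_of_posBond_ne_zero {G : Type} {T : Set (Tile G)} {str : G → ℕ}
    {α : Assembly G T} {p q : ℤ × ℤ} (h : posBond str α p q ≠ 0) :
    q = (p.1 + 1, p.2) ∨ q = (p.1 - 1, p.2) ∨ q = (p.1, p.2 + 1) ∨ q = (p.1, p.2 - 1) := by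
  contrapose! h
  unfold posBond
  split
  · simp [tileBond, h]
  · rfl

/-- A cut all of whose bonds lie in a set `C` of pairs has strength at most `|C| * g`. -/
lemma cutStrength_le_of_crossing {G : Type} {T : Set (Tile G)} {str : G → ℕ} {g : ℕ}
    (hg : ∀ a, str a ≤ g) (α : Assembly G T) (A B : Finset (ℤ × ℤ))
    (C : Finset ((ℤ × ℤ) × (ℤ × ℤ)))
    (hC : ∀ p ∈ A, ∀ q ∈ B, posBond str α p q ≠ 0 → (p, q) ∈ C) :
    cutStrength str α A B ≤ C.card * g := by
  classical
  unfold cutStrength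
  rw [← Finset.sum_product']
  calc ∑ x ∈ A ×ˢ B, posBond str α x.1 x.2
      = ∑ x ∈ (A ×ˢ B).filter (fun x => posBond str α x.1 x.2 ≠ 0), posBond str α x.1 x.2 :=
        (Finset.sum_filter_ne_zero _).symm
    _ ≤ ∑ x ∈ C, posBond str α x.1 x.2 := by
        apply Finset.sum_le_sum_of_subset
        rintro ⟨p, q⟩ hx
        simp only [Finset.mem_filter, Finset.mem_product] at hx
        exact hC p hx.1.1 q hx.1.2 hx.2
    _ ≤ C.card * g := by
        simpa using Finset.sum_le_card_nsmul C _ g (fun x _ => posBond_le hg α x.1 x.2)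

/-- The width `m` and height `r` of the staircase realizing half of the square. -/
lemma exists_half_square (k : ℕ) (hk : 2 ≤ k) :
    ∃ m r : ℕ, k ^ 2 / 2 = m * k + r ∧ m < k ∧ r < k := by
  rcases Nat.even_or_odd' k with ⟨m, rfl | rfl⟩
  · refine ⟨m, 0, ?_, by omega, by omega⟩
    have : (2 * m) ^ 2 = 2 * (m * (2 * m)) := by ring
    omega
  · refine ⟨m, m, ?_, by omega, by omega⟩
    have : (2 * m + 1) ^ 2 = 2 * (m * (2 * m + 1) + m) + 1 := by ring
    omega

/-- If `α` is an assembly over a tile set in which every glue has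
strength at most `g`, the domain of `α` is a translate of the `k × k` square
with `k ≥ 2`, `τ` is a nondecreasing temperature function, and `α` is
`τ`-stable, then `τ(⌊k²/2⌋) ≤ (k + 1)·g`, and consequently
`τ(⌊k²/2⌋) ≤ 4·g·√(⌊k²/2⌋)` as real numbers. -/
theorem stable_square_temperature_bound {G : Type} {T : Set (Tile G)}
    (str : G → ℕ) (g : ℕ) (hg : ∀ a : G, str a ≤ g)
    (α : Assembly G T) (k : ℕ) (hk : 2 ≤ k)
    (hdom : ∃ v : ℤ × ℤ, (↑α.dom : Set (ℤ × ℤ)) = (· + v) '' rect k k)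
    (τ : ℕ → ℕ) (hτ : Monotone τ) (hstable : IsStable str τ α) :
    τ (k ^ 2 / 2) ≤ (k + 1) * g ∧
      ((τ (k ^ 2 / 2) : ℝ) ≤ 4 * g * Real.sqrt ((k ^ 2 / 2 : ℕ) : ℝ)) := by
  have first : τ (k ^ 2 / 2) ≤ (k + 1) * g := by
    classical
    obtain ⟨⟨a, b⟩, hv⟩ := hdom
    obtain ⟨m, r, hhalf, hm, hr⟩ := exists_half_square k hk
    have hmem : ∀ x y : ℤ, (x, y) ∈ α.dom ↔ a + 1 ≤ x ∧ x ≤ a + k ∧ b + 1 ≤ y ∧ y ≤ b + k := by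
      intro x y
      rw [← Finset.mem_coe, hv]
      constructor
      · rintro ⟨⟨x', y'⟩, ⟨h1, h2, h3, h4⟩, h⟩
        simp only [Prod.mk_add_mk, Prod.mk.injEq] at h h1 h2 h3 h4
        omega
      · rintro ⟨h1, h2, h3, h4⟩
        refine ⟨(x - a, y - b), ⟨?_, ?_, ?_, ?_⟩, ?_⟩ <;> simp <;> omega
    have hdomcard : α.dom.card = k ^ 2 := by
      have : α.dom = Finset.Icc (a + 1) (a + k) ×ˢ Finset.Icc (b + 1) (b + k) := by
        ext ⟨x, y⟩
        rw [hmem]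
        simp only [Finset.mem_product, Finset.mem_Icc]
        tauto
      rw [this, Finset.card_product, Int.card_Icc, Int.card_Icc]
      have e1 : (a + k + 1 - (a + 1)).toNat = k := by omega
      have e2 : (b + k + 1 - (b + 1)).toNat = k := by omega
      rw [e1, e2, sq]
    set A : Finset (ℤ × ℤ) := Finset.Icc (a + 1) (a + m) ×ˢ Finset.Icc (b + 1) (b + k) ∪
      {a + m + 1} ×ˢ Finset.Icc (b + 1) (b + r) with hA
    have hmemA : ∀ x y : ℤ, (x, y) ∈ A ↔
        (a + 1 ≤ x ∧ x ≤ a + m ∧ b + 1 ≤ y ∧ y ≤ b + k) ∨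
          (x = a + m + 1 ∧ b + 1 ≤ y ∧ y ≤ b + r) := by
      intro x y
      simp only [hA, Finset.mem_union, Finset.mem_product, Finset.mem_Icc, Finset.mem_singleton]
      tauto
    have hAcard : A.card = k ^ 2 / 2 := by
      rw [hA, Finset.card_union_of_disjoint, Finset.card_product, Finset.card_product,
        Int.card_Icc, Int.card_Icc, Int.card_Icc, Finset.card_singleton, hhalf]
      · have e1 : (a + m + 1 - (a + 1)).toNat = m := by omega
        have e2 : (b + k + 1 - (b + 1)).toNat = k := by omega
        have e3 : (b + r + 1 - (b + 1)).toNat = r := by omega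
        rw [e1, e2, e3, one_mul]
      · rw [Finset.disjoint_left]
        rintro ⟨x, y⟩ h1 h2
        simp only [Finset.mem_product, Finset.mem_Icc, Finset.mem_singleton] at h1 h2
        omega
    have hAsub : A ⊆ α.dom := by
      rintro ⟨x, y⟩ h
      rw [hmemA] at h
      rw [hmem]
      omega
    have hBcard : (α.dom \ A).card = k ^ 2 - k ^ 2 / 2 := by
      rw [Finset.card_sdiff_of_subset hAsub, hdomcard, hAcard]
    have hk4 : 4 ≤ k ^ 2 := by nlinarith
    -- One horizontal pair per row `y`, and the vertical pair at the step of the staircase.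
    let C : Finset ((ℤ × ℤ) × (ℤ × ℤ)) :=
      insert ((a + m + 1, b + r), (a + m + 1, b + r + 1))
        ((Finset.Icc (b + 1) (b + k)).image fun y =>
          if y ≤ b + r then ((a + m + 1, y), (a + m + 1 + 1, y)) else ((a + m, y), (a + m + 1, y)))
    have hCcard : C.card ≤ k + 1 := by
      refine (Finset.card_insert_le _ _).trans (Nat.succ_le_succ (Finset.card_image_le.trans ?_))
      rw [Int.card_Icc]
      omega
    have hcut : cutStrength str α A (α.dom \ A) ≤ C.card * g := by
      apply cutStrength_le_of_crossing hg
      rintro ⟨x, y⟩ hp ⟨x', y'⟩ hq hne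
      have hadj := adj_of_posBond_ne_zero hne
      rw [Finset.mem_sdiff, hmem, hmemA] at hq
      rw [hmemA] at hp
      simp only [Prod.mk.injEq] at hadj
      simp only [C, Finset.mem_insert, Finset.mem_image, Finset.mem_Icc, Prod.mk.injEq]
      by_cases hy : y = y'
      · right
        refine ⟨y, by omega, ?_⟩
        split_ifs <;> simp only [Prod.mk.injEq, and_true] <;> omega
      · left
        omega
    have hst := hstable A (α.dom \ A) Finset.disjoint_sdiff
      (Finset.union_sdiff_of_subset hAsub) (Finset.card_pos.mp (by omega))
      (Finset.card_pos.mp (by omega))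
    rw [hAcard, hBcard, min_eq_left (by omega)] at hst
    exact hst.trans (hcut.trans (Nat.mul_le_mul_right g hCcard))
  refine ⟨first, ?_⟩
  have hsq : (k + 1) ^ 2 ≤ 16 * (k ^ 2 / 2) := by
    have h1 : k ^ 2 ≤ 2 * (k ^ 2 / 2) + 1 := by omega
    nlinarith
  have hroot : ((k : ℝ) + 1) ≤ 4 * Real.sqrt ((k ^ 2 / 2 : ℕ) : ℝ) := by
    have hsqR : ((k : ℝ) + 1) ^ 2 ≤ 16 * ((k ^ 2 / 2 : ℕ) : ℝ) := by exact_mod_cast hsq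
    have hs := Real.sq_sqrt (Nat.cast_nonneg (α := ℝ) (k ^ 2 / 2))
    refine abs_le_of_sq_le_sq' ?_ (by positivity) |>.2
    rw [mul_pow, hs]
    linarith
  calc (τ (k ^ 2 / 2) : ℝ) ≤ ((k : ℝ) + 1) * g := by exact_mod_cast first
    _ ≤ (4 * Real.sqrt ((k ^ 2 / 2 : ℕ) : ℝ)) * g :=
        mul_le_mul_of_nonneg_right hroot (Nat.cast_nonneg g)
    _ = 4 * g * Real.sqrt ((k ^ 2 / 2 : ℕ) : ℝ) := by ring
end

section
/- There exist a glue alphabet Σ with a strength function, a finite tile set T over Σ, and a nondecreasing temperature function τ : ℕ → ℕ such that the size-dependent system (T, τ) has a producible supertile that is not τ-stable. -/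
/-- The unique tile type over the one-glue alphabet `Unit`. -/
def unitTile : Tile Unit := ⟨(), (), (), ()⟩

/-- The positions `(a, 0), …, (b - 1, 0)`. -/
noncomputable def lineDom (a b : ℤ) : Finset (ℤ × ℤ) := Finset.Ico a b ×ˢ {0}

theorem mem_lineDom {a b : ℤ} {p : ℤ × ℤ} : p ∈ lineDom a b ↔ (a ≤ p.1 ∧ p.1 < b) ∧ p.2 = 0 := by
  rw [lineDom, Finset.mem_product, Finset.mem_Ico, Finset.mem_singleton]

theorem mk_mem_lineDom {a b x : ℤ} : (x, 0) ∈ lineDom a b ↔ a ≤ x ∧ x < b := by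
  simp [mem_lineDom]

theorem connectedIn_lineDom (a b : ℤ) : ConnectedIn (↑(lineDom a b) : Set (ℤ × ℤ)) := by
  have key : ∀ (k : ℕ) (x : ℤ), a ≤ x → x + k < b →
      Relation.ReflTransGen (fun p q => Adj p q ∧ p ∈ (↑(lineDom a b) : Set (ℤ × ℤ)) ∧
        q ∈ (↑(lineDom a b) : Set (ℤ × ℤ))) (x, 0) (x + k, 0) := by
    intro k x hx
    induction k with
    | zero => intro _; simpa using Relation.ReflTransGen.refl
    | succ k ih =>
      intro hk
      push_cast at hk
      refine (ih (by omega)).tail ⟨?_, ?_, ?_⟩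
      · simp [Adj]
      · rw [Finset.mem_coe, mk_mem_lineDom]; omega
      · rw [Finset.mem_coe, mk_mem_lineDom]; push_cast; omega
  rintro ⟨x, y⟩ hp ⟨x', y'⟩ hq
  simp only [Finset.mem_coe, mem_lineDom] at hp hq
  obtain ⟨⟨hx, hxb⟩, rfl⟩ := hp
  obtain ⟨⟨hx', hxb'⟩, rfl⟩ := hq
  rcases le_total x x' with h | h
  · obtain ⟨k, rfl⟩ := Int.le.dest h
    exact key k x hx hxb'
  · obtain ⟨k, rfl⟩ := Int.le.dest h
    refine Relation.ReflTransGen.mono ?_ _ _ (Relation.ReflTransGen.swap _ _ (key k x' hx' hxb))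
    rintro p q ⟨hadj, h1, h2⟩
    refine ⟨?_, h2, h1⟩
    unfold Adj at *
    omega

/-- The horizontal line of unit tiles at positions `(a, 0), …, (b - 1, 0)`. -/
noncomputable def line (a b : ℤ) : Assembly Unit {unitTile} where
  tiles p := if p ∈ lineDom a b then some unitTile else none
  dom := lineDom a b
  mem_dom p := by split_ifs with h <;> simp [h]
  connected := connectedIn_lineDom a b
  tiles_mem p t h := by
    split_ifs at h
    simpa using h.symm

theorem card_line (a b : ℤ) : (line a b).dom.card = (b - a).toNat := by
  simp [line, lineDom]

theorem sameSupertile_refl {G : Type} {T : Set (Tile G)} (α : Assembly G T) :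
    SameSupertile α α := ⟨0, fun p => by simp⟩

theorem posBond_line {a b : ℤ} {p q : ℤ × ℤ} (hp : p ∈ lineDom a b) (hq : q ∈ lineDom a b) :
    posBond (fun _ => 1) (line a b) p q = tileBond (fun _ => 1) unitTile unitTile p q := by
  simp [posBond, line, hp, hq]

theorem line_producible (n : ℕ) : Producible (fun _ => 1) {unitTile} id (line 0 (n + 1)) := by
  induction n with
  | zero => exact .single _ (by simp [card_line])
  | succ n ih =>
    refine .combine _ (line (n + 1) (n + 2)) _ ih (.single _ (by simp [card_line]))
      ⟨_, _, _, sameSupertile_refl _, sameSupertile_refl _, sameSupertile_refl _,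
        ⟨?_, ?_, ?_, ?_⟩, ?_⟩
    · rw [Finset.disjoint_left]
      intro p hp hq
      simp only [line, mem_lineDom] at hp hq
      omega
    · ext p
      simp only [line, mem_lineDom, Finset.mem_union]
      push_cast
      omega
    · intro p hp
      have hp' : p ∈ lineDom 0 (n + 1) := hp
      have : p ∈ lineDom 0 ((n + 1 : ℕ) + 1) := by
        simp only [mem_lineDom] at hp' ⊢; push_cast; omega
      simp only [line, if_pos hp', if_pos this]
    · intro p hp
      have hp' : p ∈ lineDom (n + 1) (n + 2) := hp
      have : p ∈ lineDom 0 ((n + 1 : ℕ) + 1) := by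
        simp only [mem_lineDom] at hp' ⊢; push_cast; omega
      simp only [line, if_pos hp', if_pos this]
    · -- The bond between the last tile of the old line and the new tile suffices.
      have hP : ((n : ℤ), (0 : ℤ)) ∈ lineDom 0 (n + 1) := by
        rw [mk_mem_lineDom]; omega
      have hQ : ((n : ℤ) + 1, (0 : ℤ)) ∈ lineDom (n + 1) (n + 2) := by
        rw [mk_mem_lineDom]; omega
      have hbond : posBond (fun _ => 1) (line 0 ((n + 1 : ℕ) + 1))
          ((n : ℤ), (0 : ℤ)) ((n : ℤ) + 1, (0 : ℤ)) = 1 := by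
        rw [posBond_line (by rw [mk_mem_lineDom]; push_cast; omega)
          (by rw [mk_mem_lineDom]; push_cast; omega)]
        simp [tileBond, glueBond]
      calc id (min (line 0 (n + 1)).dom.card (line (n + 1) (n + 2)).dom.card) ≤ 1 := by
            simp [card_line]
        _ = posBond (fun _ => 1) (line 0 ((n + 1 : ℕ) + 1))
              ((n : ℤ), (0 : ℤ)) ((n : ℤ) + 1, (0 : ℤ)) := hbond.symm
        _ ≤ ∑ q ∈ lineDom (n + 1) (n + 2), posBond (fun _ => 1) (line 0 ((n + 1 : ℕ) + 1))
              ((n : ℤ), (0 : ℤ)) q :=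
            Finset.single_le_sum (f := fun q => posBond (fun _ => 1)
              (line 0 ((n + 1 : ℕ) + 1)) ((n : ℤ), (0 : ℤ)) q) (fun _ _ => Nat.zero_le _) hQ
        _ ≤ _ :=
            Finset.single_le_sum (f := fun p => ∑ q ∈ lineDom (n + 1) (n + 2),
              posBond (fun _ => 1) (line 0 ((n + 1 : ℕ) + 1)) p q)
              (fun _ _ => Nat.zero_le _) hP

/-- Only the bond between `(1, 0)` and `(2, 0)` crosses the middle cut of the line of 4 tiles. -/
theorem cutStrength_middle :
    cutStrength (fun _ => 1) (line 0 4) (lineDom 0 2) (lineDom 2 4) = 1 := by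
  have h1 : lineDom 0 2 = {(0, 0), (1, 0)} := by decide
  have h2 : lineDom 2 4 = {(2, 0), (3, 0)} := by decide
  have h : ∀ p ∈ lineDom 0 2, ∀ q ∈ lineDom 2 4, posBond (fun _ => 1) (line 0 4) p q =
      tileBond (fun _ => 1) unitTile unitTile p q := by
    intro p hp q hq
    simp only [mem_lineDom] at hp hq
    exact posBond_line (by simp only [mem_lineDom]; omega) (by simp only [mem_lineDom]; omega)
  rw [cutStrength, Finset.sum_congr rfl fun p hp => Finset.sum_congr rfl (h p hp), h1, h2]
  simp [tileBond, glueBond]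

/-- There exist a glue alphabet with a strength function, a
finite tile set `T`, and a nondecreasing temperature function `τ` such that
the size-dependent system `(T, τ)` has a producible supertile that is not
`τ`-stable. -/
theorem producible_not_stable :
    ∃ (G : Type) (str : G → ℕ) (T : Set (Tile G)) (τ : ℕ → ℕ),
      T.Finite ∧ Monotone τ ∧
      ∃ α : Assembly G T, Producible str T τ α ∧ ¬ IsStable str τ α := by
  refine ⟨Unit, fun _ => 1, {unitTile}, id, Set.finite_singleton _, monotone_id, line 0 4, ?_, ?_⟩
  · simpa using line_producible 3
  · intro hstable
    have h := hstable (lineDom 0 2) (lineDom 2 4) (by decide) (by decide)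
      ⟨(0, 0), by decide⟩ ⟨(2, 0), by decide⟩
    rw [cutStrength_middle] at h
    simp [lineDom] at h
end
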